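/- For any finite simple graph G and any ℓ ≥ 0, Z_(ℓ)(G) = Z'_(ℓ)(G); moreover, a set B ⊆ V(G) is an ℓ-leaky forcing set if and only if B is an ℓ-edge-leaky forcing set. -/

import Mathlib

/-!
Zero forcing with leaks (vertex leaks, edge leaks, specified leaks, mixed leaks).

A force `u → v` is modelled as the ordered pair `(u, v) : V × V`.  All the
leak notions are encoded by a set `P` of *prohibited* forces.
-/

variable {V : Type*}

/-- With blue set `S` and prohibited set of forces `P`, vertex `u` can force `v`:
`u` is blue, `v` is a white neighbor of `u`, every other neighbor of `u` is blue,
and the force `u → v` is not prohibited. -/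
def CanForce (G : SimpleGraph V) (P : Set (V × V)) (S : Set V) (u v : V) : Prop :=
  u ∈ S ∧ v ∉ S ∧ G.Adj u v ∧ (∀ w, G.Adj u w → w ≠ v → w ∈ S) ∧ (u, v) ∉ P

/-- `Forced G P B v` means vertex `v` is eventually colored blue when the zero
forcing color change rule (avoiding the prohibited forces `P`) is applied
exhaustively starting from the blue set `B`. -/
inductive Forced (G : SimpleGraph V) (P : Set (V × V)) (B : Set V) : V → Prop
  | init : ∀ {v : V}, v ∈ B → Forced G P B v
  | force : ∀ {u v : V}, G.Adj u v → (u, v) ∉ P → Forced G P B u →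
      (∀ w, G.Adj u w → w ≠ v → Forced G P B w) → Forced G P B v

/-- `B^[∞]_P`, the set of blue vertices after exhaustively applying the zero
forcing rule with prohibited forces `P`, starting from `B`. -/
def closureSet (G : SimpleGraph V) (P : Set (V × V)) (B : Set V) : Set V :=
  {v | Forced G P B v}

/-- The prohibited forces corresponding to a set `L` of vertex leaks: a vertex
leak may not perform any force. -/
def vertexLeaks (L : Set V) : Set (V × V) := {p | p.1 ∈ L}

/-- The prohibited forces corresponding to a set `L` of edge leaks: no force may
pass across an edge leak in either direction. -/
def edgeLeaksP (L : Set (Sym2 V)) : Set (V × V) := {p | s(p.1, p.2) ∈ L}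

/-- `B` is an `ℓ`-leaky forcing set of `G`: despite any set of (at most) `ℓ`
vertex leaks, exhaustive forcing colors all of `V(G)` blue. -/
def IsLeakyForcingSet (G : SimpleGraph V) (ℓ : ℕ) (B : Set V) : Prop :=
  ∀ L : Finset V, L.card ≤ ℓ → closureSet G (vertexLeaks ↑L) B = Set.univ

/-- `B` is an `ℓ`-edge-leaky forcing set of `G`: despite any set of (at most)
`ℓ` edge leaks, exhaustive forcing colors all of `V(G)` blue. -/
def IsEdgeLeakyForcingSet (G : SimpleGraph V) (ℓ : ℕ) (B : Set V) : Prop :=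
  ∀ L : Finset (Sym2 V), ↑L ⊆ G.edgeSet → L.card ≤ ℓ →
    closureSet G (edgeLeaksP ↑L) B = Set.univ

/-- `B` is a specified `ℓ`-leaky forcing set of `G`: despite any set of (at
most) `ℓ` specified leaks (prohibited forces between adjacent vertices),
exhaustive forcing colors all of `V(G)` blue. -/
def IsSpecifiedLeakyForcingSet (G : SimpleGraph V) (ℓ : ℕ) (B : Set V) : Prop :=
  ∀ L : Finset (V × V), (∀ p ∈ L, G.Adj p.1 p.2) → L.card ≤ ℓ →
    closureSet G (↑L) B = Set.univ

/-- `B` is a mixed `ℓ`-leaky forcing set of `G`: despite any set of (at most)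
`ℓ` leaks, each a vertex leak, an edge leak, or a specified leak, exhaustive
forcing colors all of `V(G)` blue. -/
def IsMixedLeakyForcingSet (G : SimpleGraph V) (ℓ : ℕ) (B : Set V) : Prop :=
  ∀ (L₁ : Finset V) (L₂ : Finset (Sym2 V)) (L₃ : Finset (V × V)),
    ↑L₂ ⊆ G.edgeSet → (∀ p ∈ L₃, G.Adj p.1 p.2) →
    L₁.card + L₂.card + L₃.card ≤ ℓ →
    closureSet G (vertexLeaks ↑L₁ ∪ edgeLeaksP ↑L₂ ∪ (↑L₃ : Set (V × V))) B = Set.univ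

/-- A chronologically valid list of forces starting from a blue set. -/
def ValidList (G : SimpleGraph V) (P : Set (V × V)) : Set V → List (V × V) → Prop
  | _, [] => True
  | S, f :: l => CanForce G P S f.1 f.2 ∧ ValidList G P (insert f.2 S) l

/-- `F` is a forcing process (set of forces) of `B` in `G` with prohibited
forces `P`: the forces of `F` admit a chronological ordering in which each force
is valid and after applying all of them the whole graph is blue. -/
def IsForcingProcess (G : SimpleGraph V) (P : Set (V × V)) (B : Set V)
    (F : Set (V × V)) : Prop :=
  ∃ l : List (V × V), {f | f ∈ l} = F ∧ ValidList G P B l ∧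
    B ∪ Prod.snd '' F = Set.univ

/-- `B'` is obtained from `B` using `F`: `B` can color exactly `B'` blue using
only a subset of the forces in `F`, applied in a chronologically valid order. -/
def ObtainedUsing (G : SimpleGraph V) (P : Set (V × V)) (B : Set V) (F : Set (V × V))
    (B' : Set V) : Prop :=
  ∃ l : List (V × V), (∀ f ∈ l, f ∈ F) ∧ ValidList G P B l ∧
    B' = B ∪ Prod.snd '' {f | f ∈ l}

/-- `ℱ_P(B)`: the set of forces that belong to some forcing process of `B`
(with prohibited forces `P`). -/
def potentialForces (G : SimpleGraph V) (P : Set (V × V)) (B : Set V) : Set (V × V) :=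
  {f | ∃ F, IsForcingProcess G P B F ∧ f ∈ F}

/-- `Z_(ℓ)(G)`, the `ℓ`-leaky forcing number of `G`. -/
noncomputable def Zleaky (G : SimpleGraph V) (ℓ : ℕ) : ℕ :=
  sInf {n | ∃ B : Finset V, B.card = n ∧ IsLeakyForcingSet G ℓ ↑B}

/-- `Z'_(ℓ)(G)`, the `ℓ`-edge-leaky forcing number of `G`. -/
noncomputable def ZedgeLeaky (G : SimpleGraph V) (ℓ : ℕ) : ℕ :=
  sInf {n | ∃ B : Finset V, B.card = n ∧ IsEdgeLeakyForcingSet G ℓ ↑B}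

/-- `Z^s_(ℓ)(G)`, the specified `ℓ`-leaky forcing number of `G`. -/
noncomputable def Zspec (G : SimpleGraph V) (ℓ : ℕ) : ℕ :=
  sInf {n | ∃ B : Finset V, B.card = n ∧ IsSpecifiedLeakyForcingSet G ℓ ↑B}

/-- `Z^m_(ℓ)(G)`, the mixed `ℓ`-leaky forcing number of `G`. -/
noncomputable def Zmixed (G : SimpleGraph V) (ℓ : ℕ) : ℕ :=
  sInf {n | ∃ B : Finset V, B.card = n ∧ IsMixedLeakyForcingSet G ℓ ↑B}

/-- Two sets of specified leaks on `V(G)` are isomorphic if some bijection of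
the vertex set matches them up. -/
def LeaksIso (L₁ L₂ : Set (V × V)) : Prop :=
  ∃ φ : V ≃ V, ∀ x y : V, (x, y) ∈ L₁ ↔ (φ x, φ y) ∈ L₂

/-- `B` is an `L`-leaky forcing set of `G`: `B` colors all of `V(G)` blue
despite any set of specified leaks isomorphic to a subset of `L`. -/
def IsLLeakyForcingSet (G : SimpleGraph V) (L : Set (V × V)) (B : Set V) : Prop :=
  ∀ L' : Set (V × V), (∃ L₂ ⊆ L, LeaksIso L' L₂) → closureSet G L' B = Set.univ

/-- `L` is a set of independent leaks: `|T(L)| = |L|` and `T(L) ∩ H(L) = ∅`. -/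
def IsIndependentLeaks [DecidableEq V] (L : Finset (V × V)) : Prop :=
  (L.image Prod.fst).card = L.card ∧ Disjoint (L.image Prod.fst) (L.image Prod.snd)

/-- `I(L)`: the size of a largest set of independent leaks contained in `L`. -/
noncomputable def maxIndepLeaks [DecidableEq V] (L : Finset (V × V)) : ℕ :=
  sSup {n | ∃ M ⊆ L, IsIndependentLeaks M ∧ M.card = n}

/-- `Z_L(G)`, the `L`-leaky forcing number of `G`. -/
noncomputable def ZLleaky (G : SimpleGraph V) (L : Set (V × V)) : ℕ :=
  sInf {n | ∃ B : Finset V, B.card = n ∧ IsLLeakyForcingSet G L ↑B}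

/-!
Forcing stalls at a blue set `S` exactly when every force available at `S` is prohibited. Hence a
family of leaks can defeat `B` iff it can block all available forces at some proper superset of `B`.
Distinct available forces at `S` have distinct tails, and they run along distinct edges because each
of them leaves `S`. One leak of either kind therefore blocks at most one of them, and one leak is
enough to block a given one: both notions of leaky forcing say that every proper superset of `B` has
more than `ℓ` available forces.
-/

section AvailableForces

variable {G : SimpleGraph V} {P : Set (V × V)} {B S : Set V}

/-- The forces that the color change rule allows when `S` is the blue set and there are no leaks.
What obstructs a leaky forcing process at `S` is a set of leaks prohibiting all of them. -/
def availableForces (G : SimpleGraph V) (S : Set V) : Set (V × V) :=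
  {f | CanForce G ∅ S f.1 f.2}

theorem injOn_fst_availableForces : Set.InjOn Prod.fst (availableForces G S) := by
  rintro ⟨u, v⟩ ⟨-, -, -, hothers, -⟩ ⟨_, w⟩ ⟨-, hw, hadj, -, -⟩ rfl
  have hwv : w = v := by_contra fun hne => hw (hothers w hadj hne)
  rw [hwv]

theorem injOn_sym2Mk_availableForces :
    Set.InjOn (fun f : V × V => s(f.1, f.2)) (availableForces G S) := by
  rintro ⟨u, v⟩ huv ⟨u', v'⟩ huv' hedge
  rcases Sym2.eq_iff.1 hedge with ⟨htail, -⟩ | ⟨(hreversed : u = v'), -⟩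
  · exact injOn_fst_availableForces huv huv' htail
  · have hu : u ∈ S := huv.1
    have hv' : v' ∉ S := huv'.2.1
    exact absurd (hreversed ▸ hu) hv'

theorem mapsTo_sym2Mk_availableForces :
    Set.MapsTo (fun f : V × V => s(f.1, f.2)) (availableForces G S) G.edgeSet :=
  fun _ hf => hf.2.2.1

theorem subset_closureSet : B ⊆ closureSet G P B :=
  fun _ => Forced.init

theorem availableForces_closureSet_subset : availableForces G (closureSet G P B) ⊆ P := by
  rintro ⟨u, v⟩ ⟨hu, hv, hadj, hothers, -⟩
  by_contra hP
  exact hv (Forced.force hadj hP hu hothers)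

theorem closureSet_subset_of_availableForces_subset (hB : B ⊆ S) (hS : availableForces G S ⊆ P) :
    closureSet G P B ⊆ S := by
  intro v hv
  induction hv with
  | init hv => exact hB hv
  | @force u v hadj hP _ _ hu hothers =>
    by_contra hv
    exact hP (hS ⟨hu, hv, hadj, hothers, Set.notMem_empty _⟩)

end AvailableForces

/-- Both `vertexLeaks L` and `edgeLeaksP L` have the form `blocker ⁻¹' L`, where `blocker` sends a
force to its tail, respectively to the edge it runs along; `E` consists of the admissible leaks. -/
theorem forall_closureSet_preimage_eq_univ_iff {α : Type*} {G : SimpleGraph V} {B : Set V}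
    {blocker : V × V → α} {E : Set α}
    (hinj : ∀ S, Set.InjOn blocker (availableForces G S))
    (hmaps : ∀ S, Set.MapsTo blocker (availableForces G S) E) (ℓ : ℕ) :
    (∀ L : Finset α, ↑L ⊆ E → L.card ≤ ℓ → closureSet G (blocker ⁻¹' ↑L) B = Set.univ) ↔
      ∀ S, B ⊆ S → S ≠ Set.univ → (ℓ : ℕ∞) < (availableForces G S).encard := by
  constructor
  · intro hforcing S hBS hS
    by_contra! hfew
    have hfinite : (blocker '' availableForces G S).Finite :=
      (Set.finite_of_encard_le_coe hfew).image blocker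
    lift blocker '' availableForces G S to Finset α using hfinite with L hL
    have hcard : L.card ≤ ℓ := by
      rw [← ENat.natCast_le_natCast, ← Set.encard_coe_eq_coe_finsetCard, hL]
      exact (Set.encard_image_le _ _).trans hfew
    have hblocked : availableForces G S ⊆ blocker ⁻¹' ↑L := hL ▸ Set.subset_preimage_image _ _
    have hstuck := closureSet_subset_of_availableForces_subset hBS hblocked
    rw [hforcing L (hL ▸ (hmaps S).image_subset) hcard] at hstuck
    exact hS (Set.univ_subset_iff.1 hstuck)
  · intro hmany L _ hcard
    by_contra hstuck
    have hblocked : (availableForces G (closureSet G (blocker ⁻¹' ↑L) B)).encard ≤ L.card := by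
      rw [← Set.encard_coe_eq_coe_finsetCard]
      exact Set.encard_le_encard_of_injOn availableForces_closureSet_subset (hinj _)
    exact (hmany _ subset_closureSet hstuck).not_ge (hblocked.trans (mod_cast hcard))

theorem isLeakyForcingSet_iff_lt_encard_availableForces {G : SimpleGraph V} {ℓ : ℕ} {B : Set V} :
    IsLeakyForcingSet G ℓ B ↔
      ∀ S, B ⊆ S → S ≠ Set.univ → (ℓ : ℕ∞) < (availableForces G S).encard := by
  rw [← forall_closureSet_preimage_eq_univ_iff (fun _ => injOn_fst_availableForces)
    (fun _ => Set.mapsTo_univ _ _)]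
  simp only [Set.subset_univ, true_imp_iff]
  rfl

theorem isEdgeLeakyForcingSet_iff_lt_encard_availableForces {G : SimpleGraph V} {ℓ : ℕ}
    {B : Set V} :
    IsEdgeLeakyForcingSet G ℓ B ↔
      ∀ S, B ⊆ S → S ≠ Set.univ → (ℓ : ℕ∞) < (availableForces G S).encard :=
  forall_closureSet_preimage_eq_univ_iff (fun _ => injOn_sym2Mk_availableForces)
    (fun _ => mapsTo_sym2Mk_availableForces) ℓ

theorem statement6_general (G : SimpleGraph V) (ℓ : ℕ) :
    Zleaky G ℓ = ZedgeLeaky G ℓ ∧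
      ∀ B : Set V, IsLeakyForcingSet G ℓ B ↔ IsEdgeLeakyForcingSet G ℓ B := by
  have hiff (B : Set V) : IsLeakyForcingSet G ℓ B ↔ IsEdgeLeakyForcingSet G ℓ B :=
    isLeakyForcingSet_iff_lt_encard_availableForces.trans
      isEdgeLeakyForcingSet_iff_lt_encard_availableForces.symm
  exact ⟨by simp only [Zleaky, ZedgeLeaky, hiff], hiff⟩

/-- Corollary `edgefund`: `Z_(ℓ)(G) = Z'_(ℓ)(G)`, and `B` is
an `ℓ`-leaky forcing set iff `B` is an `ℓ`-edge-leaky forcing set. -/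
theorem statement6 [Fintype V] [DecidableEq V] (G : SimpleGraph V) (ℓ : ℕ) :
    Zleaky G ℓ = ZedgeLeaky G ℓ ∧
      ∀ B : Set V, IsLeakyForcingSet G ℓ B ↔ IsEdgeLeakyForcingSet G ℓ B :=
  statement6_general G ℓ
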